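/- Let (X,d) be a nonempty complete metric space, α : [0,∞) → [1,∞) nonincreasing, and β : [0,∞) → [0,1) such that the product t ↦ α(t)·β(t) has property (MT). Then every (α,β)-contraction F of X into itself with nonempty closed values whose distance function d_F is stably positive has a fixed point x* ∈ F(x*). -/

import Mathlib

/-! Iterating the selection `x ↦ y` of an `(α, β)`-contraction gives an orbit with step lengths
`t n = d(xₙ, xₙ₊₁)` and heights `r n = d_F(xₙ)`. Since `t (n + 1) ≤ α (t (n + 1)) β (t n) t n` and
`α` is nonincreasing, a step that failed to get shorter would satisfy
`t (n + 1) ≤ α (t n) β (t n) t n < t n`, so `t` decreases strictly to some limit. Property (MT) at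
this limit bounds `α (t n) β (t n)` by some `q < 1`, so that `r (n + 1) ≤ q r n` eventually.
The heights are thus summable, and so are the steps because `α ≤ α 0`. The orbit converges, and
stable positivity forces `d_F` to vanish at its limit. The argument is about the height function
alone and gives a point where any such function `h` is nonpositive; for `h = d_F` with closed
values, this is a fixed point. -/

open Set Filter Topology

/-- Property (MT) of Mizoguchi and Takahashi, `limsup_{s → t⁺} k s < 1` for all `t ≥ 0`. It is
expressed by eventual upper bounds because the real `limsup` of an unbounded function is a junk
value. -/
def HasMTProperty (k : ℝ → ℝ) : Prop :=
  ∀ t, 0 ≤ t → ∃ q < 1, ∀ᶠ s in 𝓝[>] t, k s ≤ q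

namespace HasMTProperty

variable {k : ℝ → ℝ}

theorem of_limsup_lt_one (hk : ∀ t > 0, k t < 1)
    (hlimsup : ∀ t, 0 ≤ t → limsup k (𝓝[>] t) < 1) : HasMTProperty k := by
  intro t ht
  obtain ⟨q, hlimsup_lt, hq⟩ := exists_between (hlimsup t ht)
  have hbdd : IsBoundedUnder (· ≤ ·) (𝓝[>] t) k :=
    isBoundedUnder_of_eventually_le <|
      eventually_mem_nhdsWithin.mono fun s hs ↦ (hk s (ht.trans_lt hs)).le
  exact ⟨q, hq, (eventually_lt_of_limsup_lt hlimsup_lt hbdd).mono fun _ ↦ le_of_lt⟩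

theorem exists_eventually_le (hk : HasMTProperty k) {t : ℕ → ℝ} (ht : StrictAnti t)
    (ht_nonneg : ∀ n, 0 ≤ t n) : ∃ q < 1, ∀ᶠ n in atTop, k (t n) ≤ q := by
  have hbdd : BddBelow (range t) := ⟨0, forall_mem_range.2 ht_nonneg⟩
  have hlim : Tendsto t atTop (𝓝[>] ⨅ n, t n) :=
    tendsto_nhdsWithin_iff.2 ⟨tendsto_atTop_ciInf ht.antitone hbdd,
      .of_forall fun n ↦ (ciInf_le hbdd (n + 1)).trans_lt (ht n.lt_succ_self)⟩
  obtain ⟨q, hq, hkq⟩ := hk _ (le_ciInf ht_nonneg)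
  exact ⟨q, hq, hlim.eventually hkq⟩

end HasMTProperty

/-- Stable positivity of a function `h`: near every point where `h` is positive, `h` is bounded
below by a positive constant. -/
def StablyPositive {X : Type*} [TopologicalSpace X] (h : X → ℝ) : Prop :=
  ∀ x, 0 < h x → ∃ U ∈ 𝓝 x, ∃ m > 0, ∀ y ∈ U, m ≤ h y

theorem StablyPositive.nonpos_of_tendsto {X ι : Type*} [TopologicalSpace X] {h : X → ℝ}
    (hh : StablyPositive h) {l : Filter ι} [l.NeBot] {u : ι → X} {x : X}
    (hu : Tendsto u l (𝓝 x)) (hhu : Tendsto (fun i ↦ h (u i)) l (𝓝 0)) : h x ≤ 0 := by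
  by_contra! hx
  obtain ⟨U, hU, m, hm, hmU⟩ := hh x hx
  obtain ⟨i, hiU, him⟩ := ((hu.eventually_mem hU).and (hhu.eventually_lt_const hm)).exists
  exact (hmU _ hiU).not_gt him

/-- The numerical data of an orbit `(xₙ)` of an `(α, β)`-mapping along which `d_F` never vanishes:
`t n` stands for the step length `d(xₙ, xₙ₊₁)` and `r n` for the height `d_F(xₙ)`. -/
structure IsPositiveOrbit (α β : ℝ → ℝ) (t r : ℕ → ℝ) : Prop where
  step_pos : ∀ n, 0 < t n
  height_pos : ∀ n, 0 < r n
  step_le : ∀ n, t n ≤ α (t n) * r n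
  height_succ_le : ∀ n, r (n + 1) ≤ β (t n) * t n

namespace IsPositiveOrbit

variable {α β : ℝ → ℝ} {t r : ℕ → ℝ}

theorem alpha_pos (H : IsPositiveOrbit α β t r) (n : ℕ) : 0 < α (t n) :=
  pos_of_mul_pos_left ((H.step_pos n).trans_le (H.step_le n)) (H.height_pos n).le

theorem beta_pos (H : IsPositiveOrbit α β t r) (n : ℕ) : 0 < β (t n) :=
  pos_of_mul_pos_left ((H.height_pos (n + 1)).trans_le (H.height_succ_le n)) (H.step_pos n).le

theorem height_succ_le_mul (H : IsPositiveOrbit α β t r) (n : ℕ) :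
    r (n + 1) ≤ α (t n) * β (t n) * r n :=
  calc
    r (n + 1) ≤ β (t n) * t n := H.height_succ_le n
    _ ≤ β (t n) * (α (t n) * r n) := mul_le_mul_of_nonneg_left (H.step_le n) (H.beta_pos n).le
    _ = α (t n) * β (t n) * r n := by ring

theorem strictAnti_step (H : IsPositiveOrbit α β t r) (hα : AntitoneOn α (Ioi 0))
    (hαβ : ∀ s > 0, α s * β s < 1) : StrictAnti t := by
  refine strictAnti_nat_of_succ_lt fun n ↦ ?_
  by_contra! hle
  have hα_le : α (t (n + 1)) ≤ α (t n) := hα (H.step_pos n) (H.step_pos (n + 1)) hle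
  have hlt : t (n + 1) < t n :=
    calc
      t (n + 1) ≤ α (t (n + 1)) * r (n + 1) := H.step_le (n + 1)
      _ ≤ α (t n) * r (n + 1) := mul_le_mul_of_nonneg_right hα_le (H.height_pos (n + 1)).le
      _ ≤ α (t n) * (β (t n) * t n) :=
        mul_le_mul_of_nonneg_left (H.height_succ_le n) (H.alpha_pos n).le
      _ = α (t n) * β (t n) * t n := by ring
      _ < t n := mul_lt_of_lt_one_left (H.step_pos n) (hαβ _ (H.step_pos n))
  exact hle.not_gt hlt

theorem summable_height (H : IsPositiveOrbit α β t r) (hα : AntitoneOn α (Ioi 0))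
    (hαβ : ∀ s > 0, α s * β s < 1) (hMT : HasMTProperty fun s ↦ α s * β s) : Summable r := by
  obtain ⟨q, hq, hαβ_le⟩ :=
    hMT.exists_eventually_le (H.strictAnti_step hα hαβ) fun n ↦ (H.step_pos n).le
  refine summable_of_ratio_norm_eventually_le hq (hαβ_le.mono fun n hn ↦ ?_)
  rw [Real.norm_of_nonneg (H.height_pos _).le, Real.norm_of_nonneg (H.height_pos _).le]
  exact (H.height_succ_le_mul n).trans (mul_le_mul_of_nonneg_right hn (H.height_pos n).le)

theorem summable_step (H : IsPositiveOrbit α β t r) (hα : AntitoneOn α (Ici 0))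
    (hr : Summable r) : Summable t := by
  refine (hr.mul_left (α 0)).of_nonneg_of_le (fun n ↦ (H.step_pos n).le) fun n ↦ ?_
  have hα_le : α (t n) ≤ α 0 := hα self_mem_Ici (H.step_pos n).le (H.step_pos n).le
  exact (H.step_le n).trans (mul_le_mul_of_nonneg_right hα_le (H.height_pos n).le)

theorem of_iterate {X : Type*} [PseudoMetricSpace X] {h : X → ℝ} {f : X → X}
    (hpos : ∀ x, 0 < h x) (hdist : ∀ x, dist x (f x) ≤ α (dist x (f x)) * h x)
    (hheight : ∀ x, h (f x) ≤ β (dist x (f x)) * dist x (f x)) (x : X) :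
    IsPositiveOrbit α β (fun n ↦ dist (f^[n] x) (f^[n + 1] x)) (fun n ↦ h (f^[n] x)) := by
  simp only [Function.iterate_succ_apply']
  refine ⟨fun n ↦ dist_nonneg.lt_of_ne' fun hzero ↦ ?_, fun n ↦ hpos _, fun n ↦ hdist _, ?_⟩
  · have hnonpos := hheight (f^[n] x)
    rw [hzero, mul_zero] at hnonpos
    exact (hpos _).not_ge hnonpos
  · simpa only [Function.iterate_succ_apply'] using fun n ↦ hheight (f^[n] x)

end IsPositiveOrbit

theorem fixed_point_of_nonincreasing_alpha_general
    {X : Type*} [PseudoMetricSpace X] [Nonempty X] [CompleteSpace X]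
    {α β : ℝ → ℝ} (hα : AntitoneOn α (Ici 0)) (hMT : HasMTProperty fun s ↦ α s * β s)
    (hαβ : ∀ s > 0, α s * β s < 1) {h : X → ℝ} (hh : StablyPositive h)
    (hstep : ∀ x, ∃ y, dist x y ≤ α (dist x y) * h x ∧ h y ≤ β (dist x y) * dist x y) :
    ∃ x, h x ≤ 0 := by
  by_contra! hpos
  choose f hdist hheight using hstep
  obtain ⟨x₀⟩ := ‹Nonempty X›
  have orbit := IsPositiveOrbit.of_iterate hpos hdist hheight x₀
  have hheights := orbit.summable_height (hα.mono Ioi_subset_Ici_self) hαβ hMT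
  obtain ⟨x, hx⟩ := cauchySeq_tendsto_of_complete <|
    cauchySeq_of_summable_dist (orbit.summable_step hα hheights)
  exact (hpos x).not_ge (hh.nonpos_of_tendsto hx hheights.tendsto_atTop_zero)

/-- **Theorem 1.5.** If `α` is nonincreasing and the product `t ↦ α t * β t` has the
Mizoguchi–Takahashi property, then every `(α,β)`-contraction of a nonempty complete
metric space into itself with nonempty closed values whose distance function `d_F` is
stably positive has a fixed point. -/
theorem fixed_point_of_nonincreasing_alpha
    {X : Type*} [MetricSpace X] [Nonempty X] [CompleteSpace X]
    (α β : ℝ → ℝ)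
    (hα : ∀ t, 0 ≤ t → 1 ≤ α t)
    (hβ : ∀ t, 0 ≤ t → β t ∈ Set.Ico (0 : ℝ) 1)
    -- α is nonincreasing on [0,∞)
    (hαmono : AntitoneOn α (Set.Ici 0))
    -- the product α·β has property (MT)
    (hMT : ∀ t, 0 ≤ t →
      Filter.limsup (fun s => α s * β s) (nhdsWithin t (Set.Ioi t)) < 1)
    (F : X → Set X)
    (hFne : ∀ x, (F x).Nonempty) (hFcl : ∀ x, IsClosed (F x))
    -- F is an (α,β)-mapping
    (hFab : ∀ x : X, ∃ y ∈ F x,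
      dist x y ≤ α (dist x y) * Metric.infDist x (F x) ∧
      Metric.infDist y (F y) ≤ β (dist x y) * dist x y)
    -- ... and in fact an (α,β)-contraction
    (hcontr : ∀ t > (0 : ℝ), α t * β t < 1)
    -- the distance function d_F is stably positive
    (hstab : ∀ x : X, 0 < Metric.infDist x (F x) →
      ∃ U ∈ nhds x, ∃ m > (0 : ℝ), ∀ y ∈ U, m ≤ Metric.infDist y (F y)) :
    ∃ x : X, x ∈ F x := by
  obtain ⟨x, hx⟩ := fixed_point_of_nonincreasing_alpha_general hαmono
    (.of_limsup_lt_one hcontr hMT) hcontr hstab fun x ↦ (hFab x).imp fun _ ↦ And.right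
  exact ⟨x, ((hFcl x).mem_iff_infDist_zero (hFne x)).2 (hx.antisymm Metric.infDist_nonneg)⟩
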